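/- arXiv:0711.4849 — 2 statements merged into one kernel-verified Lean document; each statement's English description precedes it below -/
import Mathlib

section
/- Let (t, n, b) be a smooth right-handed orthonormal frame on an open set U ⊆ ℝ³, let α be a smooth nowhere-zero scalar function and μ a smooth scalar function on U, and set J = α(n + μb). Then J satisfies the Jacobi identity J·(curl J) = 0 on U if and only if μ satisfies the Riccati equation ∂_s μ = Ω_n + μ Ω_nb + μ² Ω_b at every point of U. -/
/-!
The helicity density `hel F = F · curl F` is a quadratic form in the field `F`, with polarization
`crossHel`. It is homogeneous even under multiplication by a function `f`, namely
`hel (f F) = f² hel F`, because the extra term `∇f × F` of `curl (f F)` is orthogonal to `F`.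
Its polarization is not: `crossHel F (f G) = f crossHel F G - (F × G) · ∇f`. Expanding
`hel (α (n + μ b))` with these rules gives `α² (Ωₙ + μ Ωₙᵦ + μ² Ωᵦ - (n × b) · ∇μ)`, and `n × b = t`
in a right-handed orthonormal frame.
-/

noncomputable section

/-- Three-dimensional Euclidean space. -/
abbrev E3 : Type := EuclideanSpace ℝ (Fin 3)

/-- The Euclidean dot product on ℝ³. -/
def dot (u v : E3) : ℝ := ∑ i, u i * v i

/-- The cross product on ℝ³. -/
def cross (u v : E3) : E3 :=
  (WithLp.equiv 2 (Fin 3 → ℝ)).symm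
    ![u 1 * v 2 - u 2 * v 1, u 2 * v 0 - u 0 * v 2, u 0 * v 1 - u 1 * v 0]

/-- Partial derivative of a scalar function in the `i`-th coordinate direction. -/
def pd (i : Fin 3) (f : E3 → ℝ) (x : E3) : ℝ :=
  fderiv ℝ f x (EuclideanSpace.single i 1)

/-- The gradient ∇f of a scalar function. -/
def grad (f : E3 → ℝ) (x : E3) : E3 :=
  (WithLp.equiv 2 (Fin 3 → ℝ)).symm ![pd 0 f x, pd 1 f x, pd 2 f x]

/-- The curl ∇×F of a vector field. -/
def curl (F : E3 → E3) (x : E3) : E3 :=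
  (WithLp.equiv 2 (Fin 3 → ℝ)).symm
    ![pd 1 (fun y => F y 2) x - pd 2 (fun y => F y 1) x,
      pd 2 (fun y => F y 0) x - pd 0 (fun y => F y 2) x,
      pd 0 (fun y => F y 1) x - pd 1 (fun y => F y 0) x]

/-- Directional derivative ∂ₛ f = t·∇f of a scalar function along a vector field t. -/
def ds (t : E3 → E3) (f : E3 → ℝ) (x : E3) : ℝ := dot (t x) (grad f x)

/-- Componentwise directional derivative (u·∇)w of a vector field w along u. -/
def dirDeriv (u w : E3 → E3) (x : E3) : E3 :=
  (WithLp.equiv 2 (Fin 3 → ℝ)).symm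
    ![fderiv ℝ (fun y => w y 0) x (u x),
      fderiv ℝ (fun y => w y 1) x (u x),
      fderiv ℝ (fun y => w y 2) x (u x)]

/-- Helicity density w·(curl w) of a vector field. -/
def hel (w : E3 → E3) (x : E3) : ℝ := dot (w x) (curl w x)

/-- Cross-helicity sum n·(curl b) + b·(curl n). -/
def crossHel (n b : E3 → E3) (x : E3) : ℝ :=
  dot (n x) (curl b x) + dot (b x) (curl n x)

/-- A smooth right-handed orthonormal (Serret–Frenet type) frame on U. -/
def IsFrameOn (t n b : E3 → E3) (U : Set E3) : Prop :=
  ContDiffOn ℝ (⊤ : ℕ∞) t U ∧ ContDiffOn ℝ (⊤ : ℕ∞) n U ∧ ContDiffOn ℝ (⊤ : ℕ∞) b U ∧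
  ∀ x ∈ U, ‖t x‖ = 1 ∧ ‖n x‖ = 1 ∧ ‖b x‖ = 1 ∧
    dot (t x) (n x) = 0 ∧ dot (t x) (b x) = 0 ∧ dot (n x) (b x) = 0 ∧
    b x = cross (t x) (n x)

section VectorAlgebra

open scoped Matrix

lemma dot_eq_dotProduct (u v : E3) : dot u v = u.ofLp ⬝ᵥ v.ofLp := rfl

lemma ofLp_cross (u v : E3) : (cross u v).ofLp = u.ofLp ⨯₃ v.ofLp := rfl

lemma dot_self_eq_norm_sq (u : E3) : dot u u = ‖u‖ ^ 2 := by
  rw [← real_inner_self_eq_norm_sq, EuclideanSpace.inner_eq_star_dotProduct, star_trivial,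
    dot_eq_dotProduct]

lemma dot_add_left (u v w : E3) : dot (u + v) w = dot u w + dot v w :=
  add_dotProduct _ _ _

lemma dot_add_right (u v w : E3) : dot u (v + w) = dot u v + dot u w :=
  dotProduct_add _ _ _

lemma dot_smul_left (a : ℝ) (u v : E3) : dot (a • u) v = a * dot u v :=
  smul_dotProduct _ _ _

lemma dot_smul_right (a : ℝ) (u v : E3) : dot u (a • v) = a * dot u v :=
  dotProduct_smul _ _ _

lemma dot_cross_right_self (u v : E3) : dot v (cross u v) = 0 :=
  dot_cross_self _ _

lemma dot_cross_eq_neg_dot_cross (u v w : E3) : dot u (cross v w) = -dot (cross u w) v := by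
  simp only [dot_eq_dotProduct, ofLp_cross]
  rw [triple_product_permutation, ← cross_anticomm, dotProduct_neg, dotProduct_comm]

lemma cross_cross_right_self (u v : E3) :
    cross u (cross v u) = ‖u‖ ^ 2 • v - dot v u • u := by
  rw [← dot_self_eq_norm_sq]
  exact WithLp.ofLp_injective 2 (cross_cross_eq_smul_sub_smul' _ _ _)

end VectorAlgebra

lemma IsFrameOn.eq_cross {t n b : E3 → E3} {U : Set E3} (h : IsFrameOn t n b U) {x : E3}
    (hx : x ∈ U) : t x = cross (n x) (b x) := by
  obtain ⟨-, -, -, h_orthonormal⟩ := h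
  obtain ⟨-, hn, -, htn, -, -, hb⟩ := h_orthonormal x hx
  rw [hb, cross_cross_right_self, hn, htn, one_pow, one_smul, zero_smul, sub_zero]

section Leibniz

variable {f g : E3 → ℝ} {F G : E3 → E3} {x : E3}

lemma pd_add (i : Fin 3) (hf : DifferentiableAt ℝ f x) (hg : DifferentiableAt ℝ g x) :
    pd i (fun y => f y + g y) x = pd i f x + pd i g x := by
  rw [pd, fderiv_fun_add hf hg]
  rfl

lemma pd_mul (i : Fin 3) (hf : DifferentiableAt ℝ f x) (hg : DifferentiableAt ℝ g x) :
    pd i (fun y => f y * g y) x = f x * pd i g x + g x * pd i f x := by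
  rw [pd, fderiv_fun_mul hf hg]
  rfl

lemma curl_add (hF : DifferentiableAt ℝ F x) (hG : DifferentiableAt ℝ G x) :
    curl (F + G) x = curl F x + curl G x := by
  have hpd (i j : Fin 3) : pd i (fun y => F y j + G y j) x
      = pd i (fun y => F y j) x + pd i (fun y => G y j) x :=
    pd_add i (differentiableAt_euclidean.1 hF j) (differentiableAt_euclidean.1 hG j)
  ext k
  fin_cases k <;>
    simp only [curl, hpd, Pi.add_apply, PiLp.add_apply, WithLp.equiv_symm_apply, Fin.zero_eta,
      Fin.mk_one, Fin.reduceFinMk, Matrix.cons_val] <;>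
    ring

lemma curl_smul (hf : DifferentiableAt ℝ f x) (hF : DifferentiableAt ℝ F x) :
    curl (f • F) x = f x • curl F x + cross (grad f x) (F x) := by
  have hpd (i j : Fin 3) : pd i (fun y => f y * F y j) x
      = f x * pd i (fun y => F y j) x + F x j * pd i f x :=
    pd_mul i hf (differentiableAt_euclidean.1 hF j)
  ext k
  fin_cases k <;>
    simp only [curl, cross, grad, hpd, Pi.smul_apply', PiLp.smul_apply, smul_eq_mul,
      PiLp.add_apply, WithLp.equiv_symm_apply, Fin.zero_eta, Fin.mk_one, Fin.reduceFinMk,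
      Matrix.cons_val] <;>
    ring

lemma hel_add (hF : DifferentiableAt ℝ F x) (hG : DifferentiableAt ℝ G x) :
    hel (F + G) x = hel F x + crossHel F G x + hel G x := by
  simp only [hel, crossHel, curl_add hF hG, Pi.add_apply, dot_add_left, dot_add_right]
  ring

lemma hel_smul (hf : DifferentiableAt ℝ f x) (hF : DifferentiableAt ℝ F x) :
    hel (f • F) x = f x ^ 2 * hel F x := by
  simp only [hel, curl_smul hf hF, Pi.smul_apply', dot_smul_left, dot_add_right, dot_smul_right,
    dot_cross_right_self]
  ring

lemma crossHel_smul_right (hf : DifferentiableAt ℝ f x) (hG : DifferentiableAt ℝ G x) :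
    crossHel F (f • G) x = f x * crossHel F G x - dot (cross (F x) (G x)) (grad f x) := by
  simp only [crossHel, curl_smul hf hG, Pi.smul_apply', dot_smul_left, dot_add_right,
    dot_smul_right, dot_cross_eq_neg_dot_cross]
  ring

lemma hel_smul_add_smul (hf : DifferentiableAt ℝ f x) (hg : DifferentiableAt ℝ g x)
    (hF : DifferentiableAt ℝ F x) (hG : DifferentiableAt ℝ G x) :
    hel (f • (F + g • G)) x
      = f x ^ 2 * (hel F x + g x * crossHel F G x + g x ^ 2 * hel G x
          - dot (cross (F x) (G x)) (grad g x)) := by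
  rw [hel_smul hf (hF.add (hg.smul hG)), hel_add hF (hg.smul hG), crossHel_smul_right hg hG,
    hel_smul hg hG]
  ring

end Leibniz

theorem jacobi_iff_riccati_mu_general {U : Set E3} (hU : IsOpen U) {t n b : E3 → E3}
    (ht : ∀ x ∈ U, t x = cross (n x) (b x))
    (hn : DifferentiableOn ℝ n U) (hb : DifferentiableOn ℝ b U) {α μ : E3 → ℝ}
    (hα : DifferentiableOn ℝ α U) (hμ : DifferentiableOn ℝ μ U) (hα0 : ∀ x ∈ U, α x ≠ 0) :
    (∀ x ∈ U, hel (α • (n + μ • b)) x = 0)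
      ↔ ∀ x ∈ U, ds t μ x = hel n x + μ x * crossHel n b x + μ x ^ 2 * hel b x := by
  refine forall₂_congr fun x hx => ?_
  have hxU : U ∈ nhds x := hU.mem_nhds hx
  rw [hel_smul_add_smul (hα.differentiableAt hxU) (hμ.differentiableAt hxU)
      (hn.differentiableAt hxU) (hb.differentiableAt hxU),
    ← ht x hx, ← ds, mul_eq_zero, or_iff_right (pow_ne_zero 2 (hα0 x hx)), sub_eq_zero,
    eq_comm]

/-- J = α(n + μb) satisfies the Jacobi identity iff μ satisfies the
Riccati equation ∂ₛμ = Ωₙ + μ Ωₙᵦ + μ² Ωᵦ. -/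
theorem jacobi_iff_riccati_mu
    (U : Set E3) (hU : IsOpen U) (t n b : E3 → E3)
    (hframe : IsFrameOn t n b U)
    (α μ : E3 → ℝ)
    (hα : ContDiffOn ℝ (⊤ : ℕ∞) α U) (hμ : ContDiffOn ℝ (⊤ : ℕ∞) μ U)
    (hα0 : ∀ x ∈ U, α x ≠ 0) :
    (∀ x ∈ U, dot (α x • (n x + μ x • b x))
        (curl (fun y => α y • (n y + μ y • b y)) x) = 0)
      ↔ (∀ x ∈ U, ds t μ x
          = hel n x + μ x * crossHel n b x + μ x ^ 2 * hel b x) :=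
  jacobi_iff_riccati_mu_general hU (fun _ hx => hframe.eq_cross hx)
    (hframe.2.1.differentiableOn (by simp)) (hframe.2.2.1.differentiableOn (by simp))
    (hα.differentiableOn (by simp)) (hμ.differentiableOn (by simp)) hα0
end
end

section
/- Let (t, n, b) be a smooth right-handed orthonormal frame on an open set U ⊆ ℝ³ with Ω_b = 0 identically on U. Let α be smooth and nowhere zero, μ smooth with ∂_s μ = Ω_n + μ Ω_nb on U (Riccati equation with Ω_b = 0), and J = α(n + μb). Suppose there are smooth scalar functions H₁, H₂ and a smooth nowhere-zero vector field v on U with v = J × ∇H₁, v = b × ∇H₂ and t = v/‖v‖. Then J and b are compatible Poisson vectors: J·(curl b) + b·(curl J) = 0 on U. -/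
/-!
Two Poisson vectors `J`, `K` that generate the same nonvanishing field `v = J × ∇H₁ = K × ∇H₂` are
always compatible. If `J · curl J = 0`, expanding `curl J × (J × ∇H₁)` and using
`div (J × ∇H₁) = curl J · ∇H₁` gives `curl J × v = (div v) J`; likewise `curl K × v = (div v) K`,
with the same factor `div v`. Since `J` and `K` are orthogonal to `v`, the Binet–Cauchy identity
then yields `(J · curl K) ‖v‖² = (div v) (J × v) · K` and `(K · curl J) ‖v‖² = (div v) (K × v) · J`,
and the two triple products cancel.

For an orthonormal frame the field `J = α (n + μ b)` is a Poisson vector because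
`J · curl J = α² (Ω_n + μ Ω_nb + μ² Ω_b - ∂_s μ)`, whose bracket vanishes by the Riccati equation.
-/

noncomputable section

open Matrix Topology

lemma differentiableAt_fderiv_of_contDiffAt {𝕜 V W : Type*} [NontriviallyNormedField 𝕜]
    [NormedAddCommGroup V] [NormedSpace 𝕜 V] [NormedAddCommGroup W] [NormedSpace 𝕜 W]
    {f : V → W} {x : V} (hf : ContDiffAt 𝕜 2 f x) : DifferentiableAt 𝕜 (fderiv 𝕜 f) x :=
  (hf.fderiv_right (m := 1) one_add_one_eq_two.le).differentiableAt one_ne_zero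

namespace E3

lemma dot_eq_dotProduct (u v : E3) : dot u v = u.ofLp ⬝ᵥ v.ofLp := rfl

lemma ofLp_cross (u v : E3) : (cross u v).ofLp = u.ofLp ⨯₃ v.ofLp := rfl

lemma dot_self (u : E3) : dot u u = ‖u‖ ^ 2 := by
  rw [EuclideanSpace.real_norm_sq_eq]
  simp only [dot, sq]

lemma dot_self_cross (u v : E3) : dot u (cross u v) = 0 :=
  _root_.dot_self_cross u.ofLp v.ofLp

lemma cross_dot_swap (u v w : E3) : dot (cross u v) w = -dot (cross w v) u := by
  rw [dot_eq_dotProduct, dot_eq_dotProduct, ofLp_cross, ofLp_cross, dotProduct_comm,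
    dotProduct_comm _ u.ofLp, triple_product_permutation, ← cross_anticomm, dotProduct_neg]

lemma cross_cross_right (u v w : E3) : cross u (cross v w) = dot u w • v - dot v u • w :=
  congrArg (WithLp.toLp 2) (cross_cross_eq_smul_sub_smul' u.ofLp v.ofLp w.ofLp)

lemma dot_mul_dot_self_of_cross_eq_smul {u v w z : E3} {k : ℝ} (huv : dot u v = 0)
    (hwv : cross w v = k • z) : dot u w * dot v v = k * dot (cross u v) z :=
  calc dot u w * dot v v
      = dot u w * dot v v - dot u v * dot v w := by rw [huv]; ring
    _ = dot (cross u v) (cross w v) := (cross_dot_cross u.ofLp v.ofLp w.ofLp v.ofLp).symm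
    _ = k * dot (cross u v) z := by
      rw [hwv, dot_eq_dotProduct, WithLp.ofLp_smul, dotProduct_smul, smul_eq_mul,
        dot_eq_dotProduct]

variable {f g : E3 → ℝ} {F G : E3 → E3} {x : E3}

lemma pd_add (hf : DifferentiableAt ℝ f x) (hg : DifferentiableAt ℝ g x) (i : Fin 3) :
    pd i (fun y => f y + g y) x = pd i f x + pd i g x := by
  simp only [pd, fderiv_fun_add hf hg, _root_.add_apply]

lemma pd_sub (hf : DifferentiableAt ℝ f x) (hg : DifferentiableAt ℝ g x) (i : Fin 3) :
    pd i (fun y => f y - g y) x = pd i f x - pd i g x := by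
  simp only [pd, fderiv_fun_sub hf hg, _root_.sub_apply]

lemma pd_mul (hf : DifferentiableAt ℝ f x) (hg : DifferentiableAt ℝ g x) (i : Fin 3) :
    pd i (fun y => f y * g y) x = f x * pd i g x + g x * pd i f x := by
  simp only [pd, fderiv_fun_mul hf hg, _root_.add_apply, _root_.smul_apply, smul_eq_mul]

lemma differentiableAt_pd (hf : ContDiffAt ℝ 2 f x) (i : Fin 3) :
    DifferentiableAt ℝ (pd i f) x :=
  (differentiableAt_fderiv_of_contDiffAt hf).clm_apply (differentiableAt_const _)

lemma differentiableAt_grad (hf : ContDiffAt ℝ 2 f x) : DifferentiableAt ℝ (grad f) x := by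
  refine differentiableAt_euclidean.2 fun i => ?_
  fin_cases i <;> exact differentiableAt_pd hf _

lemma pd_pd_eq_fderiv_fderiv (hf : ContDiffAt ℝ 2 f x) (i j : Fin 3) :
    pd i (pd j f) x =
      fderiv ℝ (fderiv ℝ f) x (EuclideanSpace.single i 1) (EuclideanSpace.single j 1) := by
  change fderiv ℝ (fun y => fderiv ℝ f y (EuclideanSpace.single j 1)) x _ = _
  rw [fderiv_clm_apply (differentiableAt_fderiv_of_contDiffAt hf) (differentiableAt_const _)]
  simp

lemma pd_comm (hf : ContDiffAt ℝ 2 f x) (i j : Fin 3) : pd i (pd j f) x = pd j (pd i f) x := by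
  have hsymm : IsSymmSndFDerivAt ℝ f x := hf.isSymmSndFDerivAt (by simp)
  rw [pd_pd_eq_fderiv_fderiv hf, pd_pd_eq_fderiv_fderiv hf, hsymm]

lemma curl_grad (hf : ContDiffAt ℝ 2 f x) : curl (grad f) x = 0 := by
  ext i
  fin_cases i <;> exact sub_eq_zero.2 (pd_comm hf _ _)

lemma curl_add (hF : DifferentiableAt ℝ F x) (hG : DifferentiableAt ℝ G x) :
    curl (fun y => F y + G y) x = curl F x + curl G x := by
  have dF := differentiableAt_euclidean.1 hF
  have dG := differentiableAt_euclidean.1 hG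
  ext i
  fin_cases i <;>
    simp only [curl, PiLp.add_apply, pd_add (dF _) (dG _), WithLp.equiv_symm_apply, Fin.zero_eta,
      Fin.mk_one, Fin.reduceFinMk, cons_val] <;>
    ring

lemma curl_smul (hf : DifferentiableAt ℝ f x) (hF : DifferentiableAt ℝ F x) :
    curl (fun y => f y • F y) x = f x • curl F x + cross (grad f x) (F x) := by
  have dF := differentiableAt_euclidean.1 hF
  ext i
  fin_cases i <;>
    simp only [curl, cross, grad, PiLp.add_apply, PiLp.smul_apply, smul_eq_mul, pd_mul hf (dF _),
      WithLp.equiv_symm_apply, Fin.zero_eta, Fin.mk_one, Fin.reduceFinMk, cons_val] <;>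
    ring

/-- The divergence `∇ · F` of a vector field on `ℝ³`, as the sum of the diagonal partial
derivatives. -/
def divergence (F : E3 → E3) (x : E3) : ℝ := ∑ i, pd i (fun y => F y i) x

lemma divergence_congr (h : F =ᶠ[𝓝 x] G) : divergence F x = divergence G x :=
  Finset.sum_congr rfl fun i _ =>
    DFunLike.congr_fun (h.fun_comp fun w : E3 => w i).fderiv_eq (EuclideanSpace.single i 1)

lemma divergence_cross (hF : DifferentiableAt ℝ F x) (hG : DifferentiableAt ℝ G x) :
    divergence (fun y => cross (F y) (G y)) x = dot (curl F x) (G x) - dot (F x) (curl G x) := by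
  have dF := differentiableAt_euclidean.1 hF
  have dG := differentiableAt_euclidean.1 hG
  have dFG := fun i j => (dF i).fun_mul (dG j)
  simp only [divergence, dot, cross, curl, Fin.sum_univ_three, WithLp.equiv_symm_apply, cons_val,
    pd_sub (dFG _ _) (dFG _ _), pd_mul (dF _) (dG _)]
  ring

lemma divergence_cross_grad (hF : DifferentiableAt ℝ F x) (hf : ContDiffAt ℝ 2 f x) :
    divergence (fun y => cross (F y) (grad f y)) x = dot (curl F x) (grad f x) := by
  rw [divergence_cross hF (differentiableAt_grad hf), curl_grad hf]
  simp [dot]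

lemma hel_add (hF : DifferentiableAt ℝ F x) (hG : DifferentiableAt ℝ G x) :
    hel (fun y => F y + G y) x = hel F x + crossHel F G x + hel G x := by
  simp only [hel, crossHel, curl_add hF hG, dot_eq_dotProduct, WithLp.ofLp_add, add_dotProduct,
    dotProduct_add]
  ring

lemma hel_smul (hf : DifferentiableAt ℝ f x) (hF : DifferentiableAt ℝ F x) :
    hel (fun y => f y • F y) x = f x ^ 2 * hel F x := by
  simp only [hel, curl_smul hf hF, dot_eq_dotProduct, WithLp.ofLp_add, WithLp.ofLp_smul,
    ofLp_cross, smul_dotProduct, dotProduct_add, dotProduct_smul, smul_eq_mul, dot_cross_self]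
  ring

lemma crossHel_smul_right (hf : DifferentiableAt ℝ f x) (hG : DifferentiableAt ℝ G x) :
    crossHel F (fun y => f y • G y) x
      = f x * crossHel F G x - dot (cross (F x) (G x)) (grad f x) := by
  have triple : dot (F x) (cross (grad f x) (G x)) = -dot (cross (F x) (G x)) (grad f x) := by
    rw [← cross_dot_swap]
    exact dotProduct_comm _ _
  rw [crossHel, curl_smul hf hG, sub_eq_add_neg, ← triple]
  simp only [crossHel, dot_eq_dotProduct, WithLp.ofLp_add, WithLp.ofLp_smul, smul_dotProduct,
    dotProduct_add, dotProduct_smul, smul_eq_mul]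
  ring

lemma hel_smul_add_smul (hf : DifferentiableAt ℝ f x) (hg : DifferentiableAt ℝ g x)
    (hF : DifferentiableAt ℝ F x) (hG : DifferentiableAt ℝ G x) :
    hel (fun y => f y • (F y + g y • G y)) x
      = f x ^ 2 * (hel F x + g x * crossHel F G x + g x ^ 2 * hel G x
          - dot (cross (F x) (G x)) (grad g x)) := by
  rw [hel_smul hf (hF.fun_add (hg.fun_smul hG)), hel_add hF (hg.fun_smul hG),
    crossHel_smul_right hg hG, hel_smul hg hG]
  ring

lemma cross_curl_of_hel_eq_zero {v : E3 → E3}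
    (hF : DifferentiableAt ℝ F x) (hf : ContDiffAt ℝ 2 f x) (hF0 : hel F x = 0)
    (hv : v =ᶠ[𝓝 x] fun y => cross (F y) (grad f y)) :
    cross (curl F x) (v x) = divergence v x • F x :=
  calc cross (curl F x) (v x)
      = dot (curl F x) (grad f x) • F x - hel F x • grad f x := by
        rw [hv.eq_of_nhds, cross_cross_right, hel]
    _ = divergence v x • F x := by
        rw [hF0, zero_smul, sub_zero, divergence_congr hv, divergence_cross_grad hF hf]

end E3

namespace IsFrameOn

variable {t n b : E3 → E3} {U : Set E3} {x : E3}

lemma differentiableAt_normal (h : IsFrameOn t n b U) (hU : U ∈ 𝓝 x) : DifferentiableAt ℝ n x :=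
  (h.2.1.contDiffAt hU).differentiableAt (by simp)

lemma differentiableAt_binormal (h : IsFrameOn t n b U) (hU : U ∈ 𝓝 x) : DifferentiableAt ℝ b x :=
  (h.2.2.1.contDiffAt hU).differentiableAt (by simp)

lemma cross_normal_binormal (h : IsFrameOn t n b U) (hx : x ∈ U) : cross (n x) (b x) = t x := by
  obtain ⟨-, hn, -, htn, -, -, hb⟩ := h.2.2.2 x hx
  rw [hb, E3.cross_cross_right, E3.dot_self, hn, htn, one_pow, one_smul, zero_smul, sub_zero]

lemma hel_eq_zero_of_riccati (h : IsFrameOn t n b U) (hU : U ∈ 𝓝 x) {α μ : E3 → ℝ}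
    (hα : DifferentiableAt ℝ α x) (hμ : DifferentiableAt ℝ μ x)
    (hric : ds t μ x = hel n x + μ x * crossHel n b x + μ x ^ 2 * hel b x) :
    hel (fun y => α y • (n y + μ y • b y)) x = 0 := by
  rw [E3.hel_smul_add_smul hα hμ (h.differentiableAt_normal hU) (h.differentiableAt_binormal hU),
    h.cross_normal_binormal (mem_of_mem_nhds hU), ← hric, ds, sub_self, mul_zero]

end IsFrameOn

/-- `hel J x = 0` says that `J` is a Poisson vector at `x`, and `crossHel J K x = 0` that `J` and
`K` are compatible there. -/
theorem degenerate_case_compatibility_general {J K v : E3 → E3} {H₁ H₂ : E3 → ℝ} {x : E3}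
    (hJ : DifferentiableAt ℝ J x) (hK : DifferentiableAt ℝ K x)
    (hH₁ : ContDiffAt ℝ 2 H₁ x) (hH₂ : ContDiffAt ℝ 2 H₂ x)
    (hJ0 : hel J x = 0) (hK0 : hel K x = 0)
    (hv₁ : v =ᶠ[𝓝 x] fun y => cross (J y) (grad H₁ y))
    (hv₂ : v =ᶠ[𝓝 x] fun y => cross (K y) (grad H₂ y)) (hv0 : v x ≠ 0) :
    crossHel J K x = 0 := by
  have hJv : dot (J x) (v x) = 0 := by rw [hv₁.eq_of_nhds, E3.dot_self_cross]
  have hKv : dot (K x) (v x) = 0 := by rw [hv₂.eq_of_nhds, E3.dot_self_cross]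
  have hcJ := E3.cross_curl_of_hel_eq_zero hJ hH₁ hJ0 hv₁
  have hcK := E3.cross_curl_of_hel_eq_zero hK hH₂ hK0 hv₂
  have hvv : dot (v x) (v x) ≠ 0 := by
    rw [E3.dot_self]
    exact pow_ne_zero 2 (norm_ne_zero_iff.2 hv0)
  refine (mul_eq_zero_iff_right hvv).1 ?_
  rw [crossHel, add_mul, E3.dot_mul_dot_self_of_cross_eq_smul hJv hcK,
    E3.dot_mul_dot_self_of_cross_eq_smul hKv hcJ, E3.cross_dot_swap]
  ring

/-- with Ωᵦ = 0, J = α(n + μb) solving the (linear) Riccati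
equation, and a bi-Hamiltonian pair v = J × ∇H₁ = b × ∇H₂, the Poisson vectors
J and b are compatible. -/
theorem degenerate_case_compatibility
    (U : Set E3) (hU : IsOpen U) (t n b : E3 → E3)
    (hframe : IsFrameOn t n b U)
    (hΩb : ∀ x ∈ U, hel b x = 0)
    (α μ : E3 → ℝ)
    (hα : ContDiffOn ℝ (⊤ : ℕ∞) α U) (hμ : ContDiffOn ℝ (⊤ : ℕ∞) μ U)
    (hα0 : ∀ x ∈ U, α x ≠ 0)
    (hric : ∀ x ∈ U, ds t μ x = hel n x + μ x * crossHel n b x)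
    (H₁ H₂ : E3 → ℝ)
    (hH₁ : ContDiffOn ℝ (⊤ : ℕ∞) H₁ U) (hH₂ : ContDiffOn ℝ (⊤ : ℕ∞) H₂ U)
    (v : E3 → E3) (hv : ContDiffOn ℝ (⊤ : ℕ∞) v U) (hv0 : ∀ x ∈ U, v x ≠ 0)
    (hham₁ : ∀ x ∈ U, v x = cross (α x • (n x + μ x • b x)) (grad H₁ x))
    (hham₂ : ∀ x ∈ U, v x = cross (b x) (grad H₂ x))
    (ht : ∀ x ∈ U, t x = ‖v x‖⁻¹ • v x) :
    ∀ x ∈ U,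
      dot (α x • (n x + μ x • b x)) (curl b x)
        + dot (b x) (curl (fun y => α y • (n y + μ y • b y)) x) = 0 := by
  intro x hx
  have hUx : U ∈ 𝓝 x := hU.mem_nhds hx
  have dα : DifferentiableAt ℝ α x := (hα.contDiffAt hUx).differentiableAt (by simp)
  have dμ : DifferentiableAt ℝ μ x := (hμ.contDiffAt hUx).differentiableAt (by simp)
  have dn : DifferentiableAt ℝ n x := hframe.differentiableAt_normal hUx
  have db : DifferentiableAt ℝ b x := hframe.differentiableAt_binormal hUx
  have hJ0 : hel (fun y => α y • (n y + μ y • b y)) x = 0 :=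
    hframe.hel_eq_zero_of_riccati hUx dα dμ (by rw [hric x hx, hΩb x hx, mul_zero, add_zero])
  change crossHel (fun y => α y • (n y + μ y • b y)) b x = 0
  exact degenerate_case_compatibility_general (dα.fun_smul (dn.fun_add (dμ.fun_smul db))) db
    (contDiffAt_infty.1 (hH₁.contDiffAt hUx) 2) (contDiffAt_infty.1 (hH₂.contDiffAt hUx) 2)
    hJ0 (hΩb x hx) (Filter.eventually_of_mem hUx hham₁) (Filter.eventually_of_mem hUx hham₂)
    (hv0 x hx)
end
end
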